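/- First reduction step exact for general q (Fmac_arg_reduct_correct2): Assume p > 3, q is an integer with 2 ≤ q < p − 1, x is a p-bit FPN, R is a positive normal p-bit FPN, C₁ is a round-to-nearest of 1/R to p − q bits, C₁ is not exactly a power of 2, C₁ ≥ 2^(p−q+max(1,N−1))·λ, 2^(−N) is a p-bit FPN, |x·R| ≤ 2^(p−N−2) − 2^(−N), z₀ is a round-to-nearest of 3·2^(p−N−2) + x·R to p bits, z is a round-to-nearest of z₀ − 3·2^(p−N−2) to p bits, and R·C₁ ≤ 1. Then x − z·C₁ is a p-bit FPN. -/

import Mathlib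

noncomputable section

/-- `x` is a `k`-bit (binary) floating-point number with minimal exponent `emin`:
there exist integers `m`, `e` with `|m| < 2^k`, `e ≥ emin` and `x = m·2^e`. -/
def IsFPN (emin k : ℤ) (x : ℝ) : Prop :=
  ∃ m e : ℤ, |(m : ℝ)| < (2 : ℝ) ^ k ∧ emin ≤ e ∧ x = (m : ℝ) * (2 : ℝ) ^ e

/-- `x` is a normal `p`-bit floating-point number: it admits a representation
with `2^(p-1) ≤ |m| < 2^p`. -/
def IsNormalFPN (emin p : ℤ) (x : ℝ) : Prop :=
  ∃ m e : ℤ, (2 : ℝ) ^ (p - 1) ≤ |(m : ℝ)| ∧ |(m : ℝ)| < (2 : ℝ) ^ p ∧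
    emin ≤ e ∧ x = (m : ℝ) * (2 : ℝ) ^ e

/-- `r` is a round-to-nearest of `a` to `k` bits (ties broken in any way). -/
def RN (emin k : ℤ) (a r : ℝ) : Prop :=
  IsFPN emin k r ∧ ∀ y : ℝ, IsFPN emin k y → |a - r| ≤ |a - y|

/-- Unit in the last place at precision `p`: `ulp(x) = 2^(⌊log₂|x|⌋ - p + 1)`. -/
def ulp (p : ℤ) (x : ℝ) : ℝ := (2 : ℝ) ^ (Int.log 2 |x| - p + 1)

/-!
The real number `x - z * C₁` is a multiple of `2 ^ e` as soon as `x` and `z * C₁` both are, so it is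
representable once it is small with respect to the exponents of both terms. The exponent of `x` is
harmless, because `|x - z * C₁| ≤ |x|`: with `y = x * R` and `s = R * C₁ ∈ [0, 1]`, the number
`y - z * s` is a convex combination of `y` and `y - z`, and `|y - z| ≤ |y|` because `z` is a point
nearest to `y` in a grid containing `0`. As for `z * C₁`, adding and subtracting
`3 * 2 ^ (p - N - 2)` makes `z` a multiple of `2 ^ (-N)`, so `z * C₁` has exponent `f - N`, where
`f` is the exponent of `C₁`. Both terms of
`x - z * C₁ = (y - z) * (1 / R) + z * (1 / R - C₁)` are controlled by a half-unit rounding error.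
-/

/-- The additive group of the integer multiples of `2 ^ g`. Representing a number with exponent `g`
splits into its membership in this group and a bound on its absolute value. -/
def dyadicGrid (g : ℤ) : AddSubgroup ℝ := AddSubgroup.zmultiples ((2 : ℝ) ^ g)

theorem mem_dyadicGrid {g : ℤ} {x : ℝ} :
    x ∈ dyadicGrid g ↔ ∃ m : ℤ, x = (m : ℝ) * (2 : ℝ) ^ g := by
  simp only [dyadicGrid, AddSubgroup.mem_zmultiples_iff, zsmul_eq_mul, eq_comm]

theorem zpow_mem_dyadicGrid {g e : ℤ} (h : g ≤ e) : (2 : ℝ) ^ e ∈ dyadicGrid g := by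
  refine mem_dyadicGrid.mpr ⟨2 ^ (e - g).toNat, ?_⟩
  push_cast
  rw [← zpow_natCast, Int.toNat_of_nonneg (sub_nonneg.mpr h), ← zpow_add₀ two_ne_zero,
    sub_add_cancel]

theorem dyadicGrid_antitone : Antitone dyadicGrid := fun _ _ h =>
  AddSubgroup.zmultiples_le_of_mem (zpow_mem_dyadicGrid h)

theorem mul_mem_dyadicGrid {g e : ℤ} {x y : ℝ} (hx : x ∈ dyadicGrid g) (hy : y ∈ dyadicGrid e) :
    x * y ∈ dyadicGrid (g + e) := by
  obtain ⟨m, rfl⟩ := mem_dyadicGrid.mp hx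
  obtain ⟨n, rfl⟩ := mem_dyadicGrid.mp hy
  refine mem_dyadicGrid.mpr ⟨m * n, ?_⟩
  rw [zpow_add₀ two_ne_zero]
  push_cast
  ring

theorem zpow_le_of_mem_dyadicGrid_of_pos {g : ℤ} {x : ℝ} (hx : x ∈ dyadicGrid g) (hpos : 0 < x) :
    (2 : ℝ) ^ g ≤ x := by
  obtain ⟨m, rfl⟩ := mem_dyadicGrid.mp hx
  have hm : 0 < m := by exact_mod_cast pos_of_mul_pos_left hpos (by positivity)
  exact le_mul_of_one_le_left (by positivity) (by exact_mod_cast hm)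

theorem zpow_le_abs_of_mem_dyadicGrid {g : ℤ} {x : ℝ} (hx : x ∈ dyadicGrid g) (hx₀ : x ≠ 0) :
    (2 : ℝ) ^ g ≤ |x| :=
  zpow_le_of_mem_dyadicGrid_of_pos (abs_mem_iff.mpr hx) (abs_pos.mpr hx₀)

theorem add_zpow_le_of_mem_dyadicGrid_of_lt {g : ℤ} {x y : ℝ} (hx : x ∈ dyadicGrid g)
    (hy : y ∈ dyadicGrid g) (hxy : x < y) : x + (2 : ℝ) ^ g ≤ y :=
  le_sub_iff_add_le'.mp
    (zpow_le_of_mem_dyadicGrid_of_pos (sub_mem hy hx) (sub_pos.mpr hxy))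

theorem exists_mem_dyadicGrid_abs_sub_le (g : ℤ) (y : ℝ) :
    ∃ w ∈ dyadicGrid g, |y - w| ≤ (2 : ℝ) ^ g / 2 := by
  have h2 : (0 : ℝ) < (2 : ℝ) ^ g := by positivity
  refine ⟨round (y / (2 : ℝ) ^ g) * (2 : ℝ) ^ g, mem_dyadicGrid.mpr ⟨_, rfl⟩, ?_⟩
  calc |y - round (y / (2 : ℝ) ^ g) * (2 : ℝ) ^ g|
      = |y / (2 : ℝ) ^ g - round (y / (2 : ℝ) ^ g)| * (2 : ℝ) ^ g := by
        rw [← abs_of_pos h2, ← abs_mul, abs_of_pos h2, sub_mul, div_mul_cancel₀ _ h2.ne']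
    _ ≤ 1 / 2 * (2 : ℝ) ^ g := by gcongr; exact abs_sub_round _
    _ = (2 : ℝ) ^ g / 2 := by ring

theorem abs_sub_le_abs_of_mem_dyadicGrid {g : ℤ} {y z : ℝ} (hz : z ∈ dyadicGrid g)
    (hyz : |y - z| ≤ (2 : ℝ) ^ g / 2) : |y - z| ≤ |y| := by
  rcases eq_or_ne z 0 with rfl | hz₀
  · rw [sub_zero]
  · have hgz := zpow_le_abs_of_mem_dyadicGrid hz hz₀
    have := abs_sub_abs_le_abs_sub z y
    rw [abs_sub_comm z y] at this
    linarith

theorem isFPN_iff {emin k : ℤ} {x : ℝ} :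
    IsFPN emin k x ↔ ∃ e, emin ≤ e ∧ x ∈ dyadicGrid e ∧ |x| < (2 : ℝ) ^ (k + e) := by
  have abs_lt_iff (m e : ℤ) :
      |(m : ℝ) * (2 : ℝ) ^ e| < (2 : ℝ) ^ (k + e) ↔ |(m : ℝ)| < (2 : ℝ) ^ k := by
    have h2 : (0 : ℝ) < (2 : ℝ) ^ e := by positivity
    rw [abs_mul, abs_of_pos h2, zpow_add₀ two_ne_zero, mul_lt_mul_iff_left₀ h2]
  constructor
  · rintro ⟨m, e, hm, he, rfl⟩
    exact ⟨e, he, mem_dyadicGrid.mpr ⟨m, rfl⟩, (abs_lt_iff m e).mpr hm⟩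
  · rintro ⟨e, he, hx, hlt⟩
    obtain ⟨m, rfl⟩ := mem_dyadicGrid.mp hx
    exact ⟨m, e, (abs_lt_iff m e).mp hlt, he, rfl⟩

theorem isFPN_of_abs_le_zpow {emin k e : ℤ} {x : ℝ} (hk : 0 < k) (he : emin ≤ e)
    (hx : x ∈ dyadicGrid e) (hle : |x| ≤ (2 : ℝ) ^ (k + e)) : IsFPN emin k x := by
  rcases hle.lt_or_eq with hlt | heq
  · exact isFPN_iff.mpr ⟨e, he, hx, hlt⟩
  · refine isFPN_iff.mpr ⟨k + e, by lia, ?_, ?_⟩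
    · exact abs_mem_iff.mp (heq ▸ zpow_mem_dyadicGrid le_rfl)
    · rw [heq]
      exact zpow_lt_zpow_right₀ one_lt_two (by lia)

theorem isFPN_sub {emin k e g : ℤ} {x y : ℝ} (he : emin ≤ e) (hg : emin ≤ g)
    (hx : x ∈ dyadicGrid e) (hy : y ∈ dyadicGrid g)
    (hlt_e : |x - y| < (2 : ℝ) ^ (k + e)) (hlt_g : |x - y| < (2 : ℝ) ^ (k + g)) :
    IsFPN emin k (x - y) := by
  rcases le_total e g with h | h
  · exact isFPN_iff.mpr ⟨e, he, sub_mem hx (dyadicGrid_antitone h hy), hlt_e⟩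
  · exact isFPN_iff.mpr ⟨g, hg, sub_mem (dyadicGrid_antitone h hx) hy, hlt_g⟩

theorem IsFPN.mem_dyadicGrid_of_zpow_le {emin k g : ℤ} {x : ℝ} (hx : IsFPN emin k x)
    (hle : (2 : ℝ) ^ (k + g - 1) ≤ |x|) : x ∈ dyadicGrid g := by
  obtain ⟨e, -, hxe, hlt⟩ := isFPN_iff.mp hx
  have := (zpow_lt_zpow_iff_right₀ one_lt_two).mp (hle.trans_lt hlt)
  exact dyadicGrid_antitone (by lia) hxe

theorem le_of_isFPN_zpow {emin k j : ℤ} (h : IsFPN emin k ((2 : ℝ) ^ j)) : emin ≤ j := by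
  obtain ⟨e, he, hmem, -⟩ := isFPN_iff.mp h
  have := zpow_le_of_mem_dyadicGrid_of_pos hmem (by positivity)
  exact he.trans ((zpow_le_zpow_iff_right₀ one_lt_two).mp this)

theorem RN.eq_of_isFPN {emin k : ℤ} {a r : ℝ} (h : RN emin k a r) (ha : IsFPN emin k a) :
    r = a := by
  have hle := h.2 a ha
  rw [sub_self, abs_zero, abs_nonpos_iff, sub_eq_zero] at hle
  exact hle.symm

theorem RN.abs_sub_le_zpow_div_two {emin k g : ℤ} {a r : ℝ} (h : RN emin k a r) (hg : emin ≤ g)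
    (ha : |a| + (2 : ℝ) ^ g / 2 < (2 : ℝ) ^ (k + g)) : |a - r| ≤ (2 : ℝ) ^ g / 2 := by
  obtain ⟨w, hw, haw⟩ := exists_mem_dyadicGrid_abs_sub_le g a
  have hwa : |w| - |a| ≤ |a - w| := abs_sub_comm w a ▸ abs_sub_abs_le_abs_sub w a
  exact (h.2 w (isFPN_iff.mpr ⟨g, hg, hw, by linarith⟩)).trans haw

theorem RN.sub_le_zpow_div_two {emin k f : ℤ} {a r : ℝ} (h : RN emin k a r) (hk : 0 < k)
    (hf : emin ≤ f) (hr : r ∈ dyadicGrid f) (hlt : |r| < (2 : ℝ) ^ (k + f)) :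
    a - r ≤ (2 : ℝ) ^ f / 2 := by
  have h2 : (0 : ℝ) < (2 : ℝ) ^ f := by positivity
  have hsucc : IsFPN emin k (r + (2 : ℝ) ^ f) := by
    refine isFPN_of_abs_le_zpow hk hf (add_mem hr (zpow_mem_dyadicGrid le_rfl))
      (abs_le.mpr ⟨?_, ?_⟩)
    · linarith [neg_lt_of_abs_lt hlt]
    · exact add_zpow_le_of_mem_dyadicGrid_of_lt hr (zpow_mem_dyadicGrid (by lia))
        (lt_of_abs_lt hlt)
  -- Since `r + 2 ^ f` is not closer to `a` than `r`, the number `a` is below their midpoint.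
  have hmin := (le_abs_self _).trans (h.2 _ hsucc)
  rcases le_abs'.mp hmin with h' | h' <;> linarith

theorem RN.lt_zpow_of_abs_lt {emin k f : ℤ} {a r : ℝ} (h : RN emin k a r) (hk : 0 < k)
    (hf : emin ≤ f) (hr : r ∈ dyadicGrid f) (hlt : |r| < (2 : ℝ) ^ (k + f)) :
    a < (2 : ℝ) ^ (k + f) := by
  have h2 : (0 : ℝ) < (2 : ℝ) ^ f := by positivity
  have hsucc := add_zpow_le_of_mem_dyadicGrid_of_lt hr
    (zpow_mem_dyadicGrid (show f ≤ k + f by lia)) (lt_of_abs_lt hlt)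
  linarith [h.sub_le_zpow_div_two hk hf hr hlt]

-- The summand `3 * 2 ^ (p - N - 2)` is the midpoint of the binade `[2 ^ (p - N - 1), 2 ^ (p - N)]`,
-- in which the `p`-bit numbers have spacing `2 ^ (-N)`.
theorem mem_dyadicGrid_and_abs_sub_le_of_RN_add_sub {emin p N : ℤ} {y z₀ z : ℝ} (hN : emin ≤ -N)
    (hy : |y| ≤ (2 : ℝ) ^ (p - N - 2) - (2 : ℝ) ^ (-N))
    (hz₀ : RN emin p (3 * (2 : ℝ) ^ (p - N - 2) + y) z₀)
    (hz : RN emin p (z₀ - 3 * (2 : ℝ) ^ (p - N - 2)) z) :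
    z ∈ dyadicGrid (-N) ∧ |y - z| ≤ (2 : ℝ) ^ (-N) / 2 := by
  have hle : (2 : ℝ) ^ (-N) ≤ (2 : ℝ) ^ (p - N - 2) := by linarith [abs_nonneg y]
  have hu : (2 : ℝ) ^ (p - N - 2) ∈ dyadicGrid (-N) :=
    zpow_mem_dyadicGrid ((zpow_le_zpow_iff_right₀ one_lt_two).mp hle)
  have hu4 : (2 : ℝ) ^ (p + -N) = 4 * (2 : ℝ) ^ (p - N - 2) := by
    rw [show p + -N = 2 + (p - N - 2) by ring, zpow_add₀ two_ne_zero]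
    norm_num
  have hu2 : (2 : ℝ) ^ (p + -N - 1) = 2 * (2 : ℝ) ^ (p - N - 2) := by
    rw [zpow_sub_one₀ two_ne_zero, hu4]
    ring
  have ht : (0 : ℝ) < (2 : ℝ) ^ (-N) := by positivity
  set t : ℝ := (2 : ℝ) ^ (-N)
  set u : ℝ := (2 : ℝ) ^ (p - N - 2)
  obtain ⟨hy₁, hy₂⟩ := abs_le.mp hy
  have herr : |y - (z₀ - 3 * u)| ≤ t / 2 := by
    have h := hz₀.abs_sub_le_zpow_div_two hN (by rw [hu4, abs_of_nonneg] <;> linarith)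
    rwa [show 3 * u + y - z₀ = y - (z₀ - 3 * u) by ring] at h
  obtain ⟨herr₁, herr₂⟩ := abs_le.mp herr
  have hz₀_mem : z₀ ∈ dyadicGrid (-N) :=
    hz₀.1.mem_dyadicGrid_of_zpow_le (le_abs.mpr (Or.inl (by linarith)))
  have hmem : z₀ - 3 * u ∈ dyadicGrid (-N) := by
    refine sub_mem hz₀_mem ?_
    simpa only [nsmul_eq_mul, Nat.cast_ofNat] using nsmul_mem hu 3
  have hexact : z = z₀ - 3 * u := hz.eq_of_isFPN <|
    isFPN_iff.mpr ⟨-N, hN, hmem, by rw [hu4, abs_lt]; constructor <;> linarith⟩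
  exact hexact ▸ ⟨hmem, herr⟩

theorem abs_sub_mul_le_of_abs_sub_le {y z s : ℝ} (hs₀ : 0 ≤ s) (hs₁ : s ≤ 1)
    (h : |y - z| ≤ |y|) : |y - z * s| ≤ |y| :=
  calc |y - z * s| = |(1 - s) * y + s * (y - z)| := by congr 1; ring
    _ ≤ (1 - s) * |y| + s * |y - z| := by
      refine (abs_add_le _ _).trans_eq ?_
      rw [abs_mul, abs_mul, abs_of_nonneg (sub_nonneg.mpr hs₁), abs_of_nonneg hs₀]
    _ ≤ (1 - s) * |y| + s * |y| := by gcongr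
    _ = |y| := by ring

theorem abs_sub_mul_le_abs {x z R C : ℝ} (hR : 0 < R) (hC : 0 ≤ C) (hRC : R * C ≤ 1)
    (h : |x * R - z| ≤ |x * R|) : |x - z * C| ≤ |x| := by
  have hscaled := abs_sub_mul_le_of_abs_sub_le (by positivity) hRC h
  rw [show x * R - z * (R * C) = (x - z * C) * R by ring, abs_mul, abs_mul x] at hscaled
  exact le_of_mul_le_mul_right hscaled (abs_pos.mpr hR.ne')

theorem abs_sub_mul_le_add {x z R C : ℝ} (hR : 0 < R) (hRC : R * C ≤ 1) :
    |x - z * C| ≤ |x * R - z| * (1 / R) + |z| * (1 / R - C) := by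
  have herr : 0 ≤ 1 / R - C := sub_nonneg.mpr ((le_div_iff₀' hR).mpr hRC)
  calc |x - z * C| = |(x * R - z) * (1 / R) + z * (1 / R - C)| := by
        congr 1
        field_simp
        ring
    _ ≤ |x * R - z| * (1 / R) + |z| * (1 / R - C) := by
        refine (abs_add_le _ _).trans_eq ?_
        rw [abs_mul, abs_mul z, abs_of_pos (one_div_pos.mpr hR), abs_of_nonneg herr]

theorem abs_sub_mul_lt_zpow {p f N : ℤ} {x z R C : ℝ} (hR : 0 < R) (hRC : R * C ≤ 1)
    (hxz : |x * R - z| ≤ (2 : ℝ) ^ (-N) / 2)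
    (hxR : |x * R| ≤ (2 : ℝ) ^ (p - N - 2) - (2 : ℝ) ^ (-N))
    (hRinv : 1 / R < (2 : ℝ) ^ (p + f)) (hC : 1 / R - C ≤ (2 : ℝ) ^ f / 2) :
    |x - z * C| < (2 : ℝ) ^ (p + (f - N)) := by
  have hz : |z| ≤ (2 : ℝ) ^ (p - N - 2) := by
    have hzx : |z| - |x * R| ≤ |x * R - z| :=
      abs_sub_comm z (x * R) ▸ abs_sub_abs_le_abs_sub z (x * R)
    have : (0 : ℝ) < (2 : ℝ) ^ (-N) := by positivity
    linarith
  calc |x - z * C| ≤ |x * R - z| * (1 / R) + |z| * (1 / R - C) := abs_sub_mul_le_add hR hRC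
    _ ≤ (2 : ℝ) ^ (-N) / 2 * (1 / R) + (2 : ℝ) ^ (p - N - 2) * ((2 : ℝ) ^ f / 2) := by
        gcongr
        exact sub_nonneg.mpr ((le_div_iff₀' hR).mpr hRC)
    _ < (2 : ℝ) ^ (-N) / 2 * (2 : ℝ) ^ (p + f) + (2 : ℝ) ^ (p - N - 2) * ((2 : ℝ) ^ f / 2) := by
        gcongr
    _ = (1 / 2 + 1 / 8) * (2 : ℝ) ^ (p + (f - N)) := by
        simp only [zpow_add₀, zpow_sub₀, zpow_neg, ne_eq, OfNat.ofNat_ne_zero, not_false_eq_true]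
        ring
    _ < (2 : ℝ) ^ (p + (f - N)) := mul_lt_of_lt_one_left (by positivity) (by norm_num)

theorem Fmac_arg_reduct_correct2_general {p k emin N : ℤ} {x R C₁ z₀ z : ℝ}
    (hk : 0 < k) (hkp : k ≤ p) (hx : IsFPN emin p x) (hR : 0 < R)
    (hC₁ : RN emin k (1 / R) C₁) (hC₁big : (2 : ℝ) ^ (k + N - 1 + emin) ≤ C₁) (hN : emin ≤ -N)
    (hxR : |x * R| ≤ (2 : ℝ) ^ (p - N - 2) - (2 : ℝ) ^ (-N))
    (hz₀ : RN emin p (3 * (2 : ℝ) ^ (p - N - 2) + x * R) z₀)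
    (hz : RN emin p (z₀ - 3 * (2 : ℝ) ^ (p - N - 2)) z) (hRC₁ : R * C₁ ≤ 1) :
    IsFPN emin p (x - z * C₁) := by
  obtain ⟨hz_mem, hxz⟩ := mem_dyadicGrid_and_abs_sub_le_of_RN_add_sub hN hxR hz₀ hz
  obtain ⟨e, he, hx_mem, hx_lt⟩ := isFPN_iff.mp hx
  obtain ⟨f, hf, hC_mem, hC_lt⟩ := isFPN_iff.mp hC₁.1
  have hC_nonneg : 0 ≤ C₁ := le_trans (by positivity) hC₁big
  have hfN : emin ≤ f - N := by
    have := (zpow_lt_zpow_iff_right₀ one_lt_two).mp (hC₁big.trans_lt (lt_of_abs_lt hC_lt))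
    lia
  have hzC_mem : z * C₁ ∈ dyadicGrid (f - N) :=
    neg_add_eq_sub N f ▸ mul_mem_dyadicGrid hz_mem hC_mem
  have hle : |x - z * C₁| ≤ |x| :=
    abs_sub_mul_le_abs hR hC_nonneg hRC₁ (abs_sub_le_abs_of_mem_dyadicGrid hz_mem hxz)
  have hRinv : 1 / R < (2 : ℝ) ^ (p + f) :=
    (hC₁.lt_zpow_of_abs_lt hk hf hC_mem hC_lt).trans_le (zpow_le_zpow_right₀ one_le_two (by lia))
  have hlt : |x - z * C₁| < (2 : ℝ) ^ (p + (f - N)) :=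
    abs_sub_mul_lt_zpow hR hRC₁ hxz hxR hRinv (hC₁.sub_le_zpow_div_two hk hf hC_mem hC_lt)
  exact isFPN_sub he hfN hx_mem hzC_mem (hle.trans_lt hx_lt) hlt

/-- First reduction step exact for general `q` (Fmac_arg_reduct_correct2). -/
theorem Fmac_arg_reduct_correct2 (p emin N q : ℤ) (hp : 3 < p)
    (hq1 : 2 ≤ q) (hq2 : q < p - 1)
    (x R C₁ z₀ z : ℝ)
    (hx : IsFPN emin p x)
    (hRpos : 0 < R) (hRnorm : IsNormalFPN emin p R)
    (hC₁ : RN emin (p - q) (1 / R) C₁)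
    (hC₁pow : ∀ j : ℤ, C₁ ≠ (2 : ℝ) ^ j)
    (hC₁big : (2 : ℝ) ^ (p - q + max 1 (N - 1)) * (2 : ℝ) ^ emin ≤ C₁)
    (hN : IsFPN emin p ((2 : ℝ) ^ (-N)))
    (hxR : |x * R| ≤ (2 : ℝ) ^ (p - N - 2) - (2 : ℝ) ^ (-N))
    (hz₀ : RN emin p (3 * (2 : ℝ) ^ (p - N - 2) + x * R) z₀)
    (hz : RN emin p (z₀ - 3 * (2 : ℝ) ^ (p - N - 2)) z)
    (hRC₁ : R * C₁ ≤ 1) :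
    IsFPN emin p (x - z * C₁) := by
  rw [← zpow_add₀ two_ne_zero] at hC₁big
  exact Fmac_arg_reduct_correct2_general (by lia) (by lia) hx hRpos hC₁
    ((zpow_le_zpow_right₀ one_le_two (by lia)).trans hC₁big) (le_of_isFPN_zpow hN) hxR hz₀ hz hRC₁
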